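/- arXiv:1112.4295 — 7 statements merged into one kernel-verified Lean document; each statement's English description precedes it below -/
import Mathlib

section
/- Let x be an irrational real number, let d ≥ 1 be an integer and c > 0 a real constant such that |x − a/b| > c/b^d for every integer a and every positive integer b. For n ≥ 1 set ε_n = c·2^{−((d−1)n+2)} and suppose ε_n < 1/4. Then: (i) the n-th bit of x equals 1 if and only if frac(2^{n−1}·x) lies in the open interval (1/2 + 2ε_n, 1 − 2ε_n); and (ii) the n-th bit of x equals 0 if and only if frac(2^{n−1}·x) lies in the open interval (2ε_n, 1/2 − 2ε_n). -/
/-- Let `x` be irrational, `d ≥ 1`, `c > 0` with the Liouville-type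
inapproximability `|x − a/b| > c/b^d` for all integers `a` and positive integers `b`.
For `n ≥ 1`, set `ε = c·2^{−((d−1)n+2)}` and suppose `ε < 1/4`. Then the `n`-th bit of `x`
(i.e. `⌊2^n·x⌋ mod 2`) is `1` iff `frac(2^{n−1}·x) ∈ (1/2 + 2ε, 1 − 2ε)`, and it is `0`
iff `frac(2^{n−1}·x) ∈ (2ε, 1/2 − 2ε)`. -/
theorem stmt_0 (x : ℝ) (hx : Irrational x) (d : ℕ) (hd : 1 ≤ d) (c : ℝ) (hc : 0 < c)
    (hLiou : ∀ (a : ℤ) (b : ℕ), 0 < b → |x - (a : ℝ) / (b : ℝ)| > c / (b : ℝ) ^ d)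
    (n : ℕ) (hn : 1 ≤ n) (ε : ℝ) (hε : ε = c / 2 ^ ((d - 1) * n + 2))
    (hε4 : ε < 1 / 4) :
    ((⌊(2 : ℝ) ^ n * x⌋ % 2 = 1 ↔
        Int.fract ((2 : ℝ) ^ (n - 1) * x) ∈ Set.Ioo (1 / 2 + 2 * ε) (1 - 2 * ε)) ∧
     (⌊(2 : ℝ) ^ n * x⌋ % 2 = 0 ↔
        Int.fract ((2 : ℝ) ^ (n - 1) * x) ∈ Set.Ioo (2 * ε) (1 / 2 - 2 * ε))) := by
  obtain ⟨m, rfl⟩ : ∃ m, n = m + 1 := ⟨n - 1, by omega⟩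
  obtain ⟨e, rfl⟩ : ∃ e, d = e + 1 := ⟨d - 1, by omega⟩
  simp only [Nat.add_sub_cancel] at *
  have hεpos : 0 < ε := by rw [hε]; positivity
  have key : ∀ a : ℤ, 4 * ε < |2 * ((2 : ℝ) ^ m * x) - a| := by
    intro a
    have h := hLiou a (2 ^ (m + 1)) (by positivity)
    push_cast at h
    have hp : (0 : ℝ) < 2 ^ (m + 1) := by positivity
    have h2 := mul_lt_mul_of_pos_left h hp
    have e1 : (2 : ℝ) ^ (m + 1) * |x - a / 2 ^ (m + 1)| = |2 * ((2 : ℝ) ^ m * x) - a| := by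
      rw [← abs_of_pos hp, ← abs_mul, abs_of_pos hp]
      congr 1
      field_simp
      ring
    have e2 : (2 : ℝ) ^ (m + 1) * (c / (2 ^ (m + 1)) ^ (e + 1)) = 4 * ε := by
      rw [hε, pow_succ _ e, ← pow_mul, pow_add _ (e * (m + 1)) 2, mul_comm e (m + 1)]
      field_simp
      norm_num
    rw [e1, e2] at h2
    exact h2
  have e3 : (2 : ℝ) ^ (m + 1) * x = 2 * (2 ^ m * x) := by ring
  rw [e3]
  generalize (2 : ℝ) ^ m * x = y at *
  have hy := Int.floor_add_fract y
  have f0 := Int.fract_nonneg y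
  have f1 := Int.fract_lt_one y
  have k0 := key (2 * ⌊y⌋)
  have k1 := key (2 * ⌊y⌋ + 1)
  have k2 := key (2 * ⌊y⌋ + 2)
  push_cast at k0 k1 k2
  generalize Int.fract y = f at *
  generalize ⌊y⌋ = k at *
  subst hy
  rw [abs_of_nonneg (by linarith)] at k0
  rw [abs_of_nonpos (by linarith)] at k2
  simp only [Set.mem_Ioo]
  rcases lt_or_ge f (1 / 2) with hf | hf
  · have hfl : ⌊2 * ((k : ℝ) + f)⌋ = 2 * k := by
      rw [Int.floor_eq_iff]; push_cast; constructor <;> linarith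
    rw [abs_of_nonpos (by linarith)] at k1
    rw [hfl]
    refine ⟨⟨fun h => by omega, fun h => by linarith [h.1]⟩,
      ⟨fun _ => ⟨by linarith, by linarith⟩, fun _ => by omega⟩⟩
  · have hfl : ⌊2 * ((k : ℝ) + f)⌋ = 2 * k + 1 := by
      rw [Int.floor_eq_iff]; push_cast; constructor <;> linarith
    rw [abs_of_nonneg (by linarith)] at k1
    rw [hfl]
    refine ⟨⟨fun _ => ⟨by linarith, by linarith⟩, fun _ => by omega⟩,
      ⟨fun h => by omega, fun h => by linarith [h.2]⟩⟩
end

section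
/- Let x be a real number, let d ≥ 1 be an integer and c > 0 a real constant such that |x − a/b| > c/b^d for every integer a and every positive integer b. Then for every natural number n and every real number S with |S − x| < c·2^{−d·n}, one has ⌊2^n·S⌋ = ⌊2^n·x⌋; in particular S and x have the same first n bits after the binary point. -/
/-- Let `x` be real, `d ≥ 1`, `c > 0` with `|x − a/b| > c/b^d` for every
integer `a` and positive integer `b`. Then for every `n : ℕ` and every real `S` with
`|S − x| < c·2^{−d·n}`, we have `⌊2^n·S⌋ = ⌊2^n·x⌋`; in particular `S` and `x` have the
same first `n` bits after the binary point (`⌊2^k·S⌋ mod 2 = ⌊2^k·x⌋ mod 2` for `k ≤ n`). -/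
theorem stmt_1 (x : ℝ) (d : ℕ) (hd : 1 ≤ d) (c : ℝ) (hc : 0 < c)
    (hLiou : ∀ (a : ℤ) (b : ℕ), 0 < b → |x - (a : ℝ) / (b : ℝ)| > c / (b : ℝ) ^ d)
    (n : ℕ) (S : ℝ) (hS : |S - x| < c / 2 ^ (d * n)) :
    ⌊(2 : ℝ) ^ n * S⌋ = ⌊(2 : ℝ) ^ n * x⌋ ∧
      ∀ k ≤ n, ⌊(2 : ℝ) ^ k * S⌋ % 2 = ⌊(2 : ℝ) ^ k * x⌋ % 2 := by
  have key : ∀ k ≤ n, ⌊(2 : ℝ) ^ k * S⌋ = ⌊(2 : ℝ) ^ k * x⌋ := by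
    intro k hk
    have hp : (0 : ℝ) < 2 ^ k := by positivity
    have hle : c / (2 : ℝ) ^ (d * n) ≤ c / 2 ^ (d * k) := by
      apply div_le_div_of_nonneg_left hc.le (by positivity)
      exact pow_le_pow_right₀ (by norm_num) (Nat.mul_le_mul_left d hk)
    have hA : ∀ a : ℤ, |S - x| < |x - (a : ℝ) / 2 ^ k| := by
      intro a
      have h := hLiou a (2 ^ k) (by positivity)
      push_cast at h
      rw [← pow_mul, mul_comm k d] at h
      linarith
    have h1 := hA ⌊(2 : ℝ) ^ k * x⌋
    have h2 := hA (⌊(2 : ℝ) ^ k * x⌋ + 1)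
    have f1 : (⌊(2 : ℝ) ^ k * x⌋ : ℝ) / 2 ^ k ≤ x := by
      rw [div_le_iff₀ hp, mul_comm]
      exact Int.floor_le _
    have f2 : x < ((⌊(2 : ℝ) ^ k * x⌋ + 1 : ℤ) : ℝ) / 2 ^ k := by
      rw [lt_div_iff₀ hp, mul_comm x]
      push_cast
      exact Int.lt_floor_add_one _
    rw [abs_of_nonneg (a := x - _) (sub_nonneg.mpr f1)] at h1
    rw [abs_of_neg (a := x - _) (by linarith)] at h2
    have l1 := neg_abs_le (S - x)
    have l2 := le_abs_self (S - x)
    rw [Int.floor_eq_iff]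
    constructor
    · rw [mul_comm _ S, ← div_le_iff₀ hp]
      linarith
    · have g : S < ((⌊(2 : ℝ) ^ k * x⌋ + 1 : ℤ) : ℝ) / 2 ^ k := by linarith
      rw [lt_div_iff₀ hp, mul_comm S] at g
      push_cast at g
      exact g
  exact ⟨key n le_rfl, fun k hk => by rw [key k hk]⟩
end

section
/- Let p be a polynomial with real coefficients and let [a,b] (a < b) be a good interval for p, with α the unique root of p in [a,b]. Set M := (sup_{t∈[a,b]} |p''(t)|) / (2·inf_{t∈[a,b]} |p'(t)|). Then there exist a ≤ a' ≤ α ≤ b' ≤ b with a' < b' and b' − a' ≤ min(1/4, 1/(4M²)), such that for every x ∈ [a',b'], the Newton step x − p(x)/p'(x) is defined and satisfies |(x − p(x)/p'(x)) − α| ≤ M·(x − α)². -/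
open Polynomial

lemma newton_remainder (p : Polynomial ℝ) (a b α x : ℝ) (hα : α ∈ Set.Icc a b)
    (hx : x ∈ Set.Icc a b) (hroot : p.eval α = 0) :
    ∃ c ∈ Set.Icc a b, p.eval x + p.derivative.eval x * (α - x) =
      -(p.derivative.derivative.eval c * (x - α) ^ 2 / 2) := by
  have hg : ∀ t : ℝ, HasDerivAt (fun t => p.eval t + p.derivative.eval t * (α - t))
      (p.derivative.derivative.eval t * (α - t)) t := by
    intro t
    have h := (p.hasDerivAt t).add
      ((p.derivative.hasDerivAt t).mul ((hasDerivAt_id t).const_sub α))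
    refine h.congr_deriv ?_
    simp only [id]
    ring
  have hq : ∀ t : ℝ, HasDerivAt (fun t => (t - α) ^ 2) (2 * (t - α)) t := by
    intro t
    have h := ((hasDerivAt_id t).sub_const α).pow 2
    refine h.congr_deriv ?_
    simp
  obtain ⟨h1, h2⟩ := hα
  obtain ⟨h3, h4⟩ := hx
  rcases lt_trichotomy α x with h | h | h
  · obtain ⟨c, hc, e⟩ := exists_ratio_hasDerivAt_eq_ratio_slope _ _ h
      (fun t _ => (hg t).continuousAt.continuousWithinAt) (fun t _ => hg t) _ _
      (fun t _ => (hq t).continuousAt.continuousWithinAt) (fun t _ => hq t)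
    refine ⟨c, ⟨by linarith [hc.1], by linarith [hc.2]⟩, ?_⟩
    have hne : c - α ≠ 0 := by
      have := hc.1
      exact (by linarith : 0 < c - α).ne'
    simp only [hroot] at e
    apply mul_left_cancel₀ hne
    linarith
  · subst h
    exact ⟨α, ⟨h1, h2⟩, by simp [hroot]⟩
  · obtain ⟨c, hc, e⟩ := exists_ratio_hasDerivAt_eq_ratio_slope _ _ h
      (fun t _ => (hg t).continuousAt.continuousWithinAt) (fun t _ => hg t) _ _
      (fun t _ => (hq t).continuousAt.continuousWithinAt) (fun t _ => hq t)
    refine ⟨c, ⟨by linarith [hc.1], by linarith [hc.2]⟩, ?_⟩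
    have hne : c - α ≠ 0 := by
      have := hc.2
      exact (by linarith : c - α < 0).ne
    simp only [hroot] at e
    apply mul_left_cancel₀ hne
    linarith

/-- Let `[a,b]` (with `a < b`) be a good interval for the real polynomial `p`
(it contains exactly one root `α` of `p` and no root of `p'` or `p''`). With
`M := (sup_{t∈[a,b]} |p''(t)|) / (2·inf_{t∈[a,b]} |p'(t)|)`, there exist
`a ≤ a' ≤ α ≤ b' ≤ b` with `a' < b'` and `b' − a' ≤ min(1/4, 1/(4M²))` such that for every
`x ∈ [a',b']` the Newton step is defined (`p'(x) ≠ 0`) and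
`|(x − p(x)/p'(x)) − α| ≤ M·(x − α)²`. -/
theorem stmt_4 (p : Polynomial ℝ) (a b : ℝ) (hab : a < b) (α : ℝ)
    (hα : α ∈ Set.Icc a b) (hroot : p.eval α = 0)
    (huniq : ∀ x ∈ Set.Icc a b, p.eval x = 0 → x = α)
    (hp' : ∀ t ∈ Set.Icc a b, p.derivative.eval t ≠ 0)
    (hp'' : ∀ t ∈ Set.Icc a b, p.derivative.derivative.eval t ≠ 0)
    (M : ℝ)
    (hM : M = sSup ((fun t => |p.derivative.derivative.eval t|) '' Set.Icc a b) /
        (2 * sInf ((fun t => |p.derivative.eval t|) '' Set.Icc a b))) :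
    ∃ a' b', a ≤ a' ∧ a' ≤ α ∧ α ≤ b' ∧ b' ≤ b ∧ a' < b' ∧
      b' - a' ≤ min (1 / 4) (1 / (4 * M ^ 2)) ∧
      ∀ x ∈ Set.Icc a' b', p.derivative.eval x ≠ 0 ∧
        |(x - p.eval x / p.derivative.eval x) - α| ≤ M * (x - α) ^ 2 := by
  have hne : (Set.Icc a b).Nonempty := ⟨α, hα⟩
  have hc1 : ContinuousOn (fun t => |p.derivative.eval t|) (Set.Icc a b) :=
    p.derivative.continuous.abs.continuousOn
  have hc2 : ContinuousOn (fun t => |p.derivative.derivative.eval t|) (Set.Icc a b) :=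
    p.derivative.derivative.continuous.abs.continuousOn
  have hk1 := isCompact_Icc.image_of_continuousOn hc1
  have hk2 := isCompact_Icc.image_of_continuousOn hc2
  set S := sSup ((fun t => |p.derivative.derivative.eval t|) '' Set.Icc a b) with hS
  set I := sInf ((fun t => |p.derivative.eval t|) '' Set.Icc a b) with hI
  have hSle : ∀ t ∈ Set.Icc a b, |p.derivative.derivative.eval t| ≤ S :=
    fun t ht => le_csSup hk2.bddAbove ⟨t, ht, rfl⟩
  have hIle : ∀ t ∈ Set.Icc a b, I ≤ |p.derivative.eval t| :=
    fun t ht => csInf_le hk1.bddBelow ⟨t, ht, rfl⟩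
  have hIpos : 0 < I := by
    obtain ⟨t, ht, e⟩ := hk1.sInf_mem (hne.image _)
    rw [hI, ← e]
    exact abs_pos.mpr (hp' t ht)
  have hSpos : 0 < S := lt_of_lt_of_le (abs_pos.mpr (hp'' α hα)) (hSle α hα)
  have hMpos : 0 < M := by rw [hM]; positivity
  have hd : 0 < min (1 / 4) (1 / (4 * M ^ 2)) := by positivity
  set d := min (1 / 4) (1 / (4 * M ^ 2))
  have e1 := le_max_right a (α - d / 2)
  have e2 := min_le_right b (α + d / 2)
  refine ⟨max a (α - d / 2), min b (α + d / 2), le_max_left _ _,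
    max_le hα.1 (by linarith), le_min hα.2 (by linarith), min_le_left _ _, ?_, by linarith, ?_⟩
  · exact max_lt (lt_min hab (by linarith [hα.1])) (lt_min (by linarith [hα.2]) (by linarith))
  · intro x hx
    have hx' : x ∈ Set.Icc a b :=
      ⟨(le_max_left _ _).trans hx.1, hx.2.trans (min_le_left _ _)⟩
    have hpx := hp' x hx'
    refine ⟨hpx, ?_⟩
    obtain ⟨c, hc, e⟩ := newton_remainder p a b α x hα hx' hroot
    have e3 : x - p.eval x / p.derivative.eval x - α =
        (p.derivative.derivative.eval c * (x - α) ^ 2 / 2) / p.derivative.eval x := by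
      rw [eq_div_iff hpx]
      field_simp
      linarith
    rw [e3, abs_div, abs_div, abs_mul, abs_of_nonneg (sq_nonneg (x - α)), abs_two, hM]
    calc |p.derivative.derivative.eval c| * (x - α) ^ 2 / 2 / |p.derivative.eval x|
        ≤ S * (x - α) ^ 2 / 2 / I := by
          gcongr
          · exact hSle c hc
          · exact hIle x hx'
      _ = S / (2 * I) * (x - α) ^ 2 := by field_simp
end

section
/- Let p be a nonzero polynomial with integer coefficients, and let α be an irrational real number with p(α) = 0, p'(α) ≠ 0, and p''(α) ≠ 0. Then there exist a rational number x₀ and a real constant K > 0 such that the Newton–Raphson sequence x_{i+1} = x_i − p(x_i)/p'(x_i) starting from x₀ is well defined for all i, and for every integer n ≥ 1, taking i(n) = ⌈K·log₂(n+1)⌉ one has ⌊2^n · x_{i(n)}⌋ = ⌊2^n · α⌋; in particular, the n-th bit of the rational number x_{i(n)} equals the n-th bit of α. -/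
open Polynomial

theorem newton_local (q : ℝ[X]) (α : ℝ) (h0 : q.eval α = 0) (h1 : q.derivative.eval α ≠ 0) :
    ∃ C δ : ℝ, 1 ≤ C ∧ 0 < δ ∧ ∀ y : ℝ, |y - α| ≤ δ → q.derivative.eval y ≠ 0 ∧
      |y - q.eval y / q.derivative.eval y - α| ≤ C * |y - α| ^ 2 := by
  obtain ⟨g, hg⟩ := Polynomial.dvd_iff_isRoot.mpr h0
  have hd : ∀ y, q.derivative.eval y = g.eval y + (y - α) * g.derivative.eval y := by
    intro y
    rw [hg]; simp
  have hq : ∀ y, q.eval y = (y - α) * g.eval y := by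
    intro y
    rw [hg]; simp
  have hc : ContinuousAt (fun y => |g.derivative.eval y / q.derivative.eval y|) α :=
    ((g.derivative.continuous.continuousAt).div (q.derivative.continuous.continuousAt) h1).abs
  have e1 : ∀ᶠ y in nhds α, q.derivative.eval y ≠ 0 :=
    (q.derivative.continuous.continuousAt).eventually_ne h1
  have e2 := hc.eventually (gt_mem_nhds (lt_add_one _))
  obtain ⟨ε, hε, hb⟩ := Metric.eventually_nhds_iff.mp (e1.and e2)
  refine ⟨|g.derivative.eval α / q.derivative.eval α| + 1, ε / 2, ?_, by positivity, ?_⟩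
  · have := abs_nonneg (g.derivative.eval α / q.derivative.eval α)
    linarith
  intro y hy
  obtain ⟨a, b⟩ := hb (y := y) (by rw [Real.dist_eq]; linarith)
  refine ⟨a, ?_⟩
  have : y - q.eval y / q.derivative.eval y - α
      = (g.derivative.eval y / q.derivative.eval y) * (y - α) ^ 2 := by
    field_simp
    rw [hq, hd]; ring
  rw [this, abs_mul, abs_pow]
  gcongr

theorem floor_eq_of_close (x α c : ℝ) (n : ℕ) (hx : |x - α| < c)
    (h : ∀ m : ℤ, c ≤ |α - m / 2 ^ n|) : ⌊(2 : ℝ) ^ n * x⌋ = ⌊(2 : ℝ) ^ n * α⌋ := by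
  have h2 : (0 : ℝ) < 2 ^ n := by positivity
  by_contra hne
  rcases lt_or_gt_of_ne hne with hlt | hlt
  · have a1 := Int.floor_lt.mp hlt
    have a2 := Int.floor_le ((2 : ℝ) ^ n * α)
    have a3 := h ⌊(2 : ℝ) ^ n * α⌋
    have b1 : x < (⌊(2 : ℝ) ^ n * α⌋ : ℝ) / 2 ^ n := by rw [lt_div_iff₀ h2]; linarith
    have b2 : (⌊(2 : ℝ) ^ n * α⌋ : ℝ) / 2 ^ n ≤ α := by rw [div_le_iff₀ h2]; linarith
    rw [abs_of_nonneg (by linarith)] at a3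
    rw [abs_lt] at hx
    linarith
  · have a1 := Int.floor_lt.mp hlt
    have a2 := Int.floor_le ((2 : ℝ) ^ n * x)
    have a3 := h ⌊(2 : ℝ) ^ n * x⌋
    have b1 : α < (⌊(2 : ℝ) ^ n * x⌋ : ℝ) / 2 ^ n := by rw [lt_div_iff₀ h2]; linarith
    have b2 : (⌊(2 : ℝ) ^ n * x⌋ : ℝ) / 2 ^ n ≤ x := by rw [div_le_iff₀ h2]; linarith
    rw [abs_of_neg (by linarith)] at a3
    rw [abs_lt] at hx
    linarith

theorem exponent_bound (r d n : ℕ) (hn : 1 ≤ n) :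
    r + n * d < 2 ^ ⌈((r + d + 2 : ℕ) : ℝ) * Real.logb 2 ((n : ℝ) + 1)⌉₊ := by
  set D := r + d + 1 with hD
  have h1 : r + n * d < D * (n + 1) := by rw [hD]; nlinarith
  have h2 : D * (n + 1) ≤ (n + 1) ^ (D + 1) := by
    rw [pow_succ]
    gcongr
    exact (Nat.lt_two_pow_self).le.trans (Nat.pow_le_pow_left (by omega) _)
  refine (h1.trans_le h2).trans_le ?_
  have h3 : (((n + 1) ^ (D + 1) : ℕ) : ℝ) ≤
      ((2 ^ ⌈((r + d + 2 : ℕ) : ℝ) * Real.logb 2 ((n : ℝ) + 1)⌉₊ : ℕ) : ℝ) := by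
    push_cast
    rw [← Real.rpow_natCast 2]
    calc ((n : ℝ) + 1) ^ (D + 1)
        = (2 : ℝ) ^ (((r + d + 2 : ℕ) : ℝ) * Real.logb 2 ((n : ℝ) + 1)) := by
          rw [mul_comm, Real.rpow_mul (by norm_num),
            Real.rpow_logb (by norm_num) (by norm_num) (by positivity), Real.rpow_natCast]
      _ ≤ _ := by
          apply Real.rpow_le_rpow_of_exponent_le (by norm_num)
          push_cast
          exact Nat.le_ceil _
  exact_mod_cast h3

/-- Let `p` be a nonzero integer polynomial and `α` an irrational real with
`p(α) = 0`, `p'(α) ≠ 0`, `p''(α) ≠ 0`. Then there are a rational starting point `x₀` and a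
constant `K > 0` such that the Newton–Raphson sequence `x_{i+1} = x_i − p(x_i)/p'(x_i)`
starting at `x₀` is well defined for all `i`, and for every `n ≥ 1`, with
`i(n) = ⌈K·log₂(n+1)⌉`, one has `⌊2^n · x_{i(n)}⌋ = ⌊2^n · α⌋` (so the `n`-th bit of the
rational `x_{i(n)}` equals the `n`-th bit of `α`). -/
theorem stmt_10 (p : Polynomial ℤ) (hp : p ≠ 0) (α : ℝ) (hirr : Irrational α)
    (hroot : Polynomial.aeval α p = 0)
    (hp' : Polynomial.aeval α (Polynomial.derivative p) ≠ 0)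
    (hp'' : Polynomial.aeval α (Polynomial.derivative (Polynomial.derivative p)) ≠ 0) :
    ∃ (x₀ : ℚ) (K : ℝ), 0 < K ∧
      ∀ x : ℕ → ℝ, x 0 = (x₀ : ℝ) →
        (∀ i, x (i + 1) = x i -
          Polynomial.aeval (x i) p / Polynomial.aeval (x i) (Polynomial.derivative p)) →
        (∀ i, Polynomial.aeval (x i) (Polynomial.derivative p) ≠ 0) ∧
        ∀ n : ℕ, 1 ≤ n →
          ⌊(2 : ℝ) ^ n * x ⌈K * Real.logb 2 ((n : ℝ) + 1)⌉₊⌋ = ⌊(2 : ℝ) ^ n * α⌋ := by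
  have key : ∀ (f : ℤ[X]) (y : ℝ), aeval y f = (f.map (algebraMap ℤ ℝ)).eval y := by
    intro f y; rw [eval_map_algebraMap]
  have keyd : ∀ (y : ℝ), aeval y (derivative p) =
      (derivative (p.map (algebraMap ℤ ℝ))).eval y := by
    intro y; rw [key, derivative_map]
  obtain ⟨C, δ, hC, hδ, hN⟩ := newton_local (p.map (algebraMap ℤ ℝ)) α
    (by rw [← key]; exact hroot) (by rw [← keyd]; exact hp')
  obtain ⟨A, hA, hL⟩ := Liouville.exists_pos_real_of_irrational_root hirr hp
    (by rw [← key]; exact hroot)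
  obtain ⟨r, hr⟩ := pow_unbounded_of_one_lt A (one_lt_two)
  have hC0 : 0 < C := by linarith
  set η := min δ (1 / (2 * C)) with hη
  have hη0 : 0 < η := lt_min hδ (by positivity)
  obtain ⟨x₀, hx1, hx2⟩ := exists_rat_btwn (show α < α + η by linarith)
  refine ⟨x₀, ((r + p.natDegree + 2 : ℕ) : ℝ), by positivity, ?_⟩
  intro x hx0 hstep
  have inv : ∀ i, |x i - α| ≤ δ ∧ C * |x i - α| ≤ (1 / 2) ^ (2 ^ i) := by
    intro i
    induction i with
    | zero =>
      have h : |x 0 - α| ≤ η := by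
        rw [hx0, abs_of_pos (by linarith)]; linarith
      refine ⟨h.trans (min_le_left _ _), ?_⟩
      have h' := h.trans (min_le_right _ _)
      calc C * |x 0 - α| ≤ C * (1 / (2 * C)) := by gcongr
        _ = _ := by field_simp; norm_num
    | succ i ih =>
      obtain ⟨i1, i2⟩ := ih
      obtain ⟨-, h2⟩ := hN (x i) i1
      rw [← key, ← keyd, ← hstep] at h2
      have hle : C * |x i - α| ≤ 1 := i2.trans (pow_le_one₀ (by norm_num) (by norm_num))
      have hab := abs_nonneg (x i - α)
      constructor
      · nlinarith
      · calc C * |x (i + 1) - α| ≤ C * (C * |x i - α| ^ 2) := by gcongr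
          _ = (C * |x i - α|) ^ 2 := by ring
          _ ≤ ((1 / 2) ^ (2 ^ i)) ^ 2 := by gcongr
          _ = _ := by rw [← pow_mul, pow_succ]
  refine ⟨fun i => by rw [keyd]; exact (hN (x i) (inv i).1).1, ?_⟩
  intro n hn
  have hE := exponent_bound r p.natDegree n hn
  set i := ⌈((r + p.natDegree + 2 : ℕ) : ℝ) * Real.logb 2 ((n : ℝ) + 1)⌉₊ with hi
  apply floor_eq_of_close _ _ ((1 / 2) ^ (r + n * p.natDegree))
  · have h1 := (inv i).2
    have h2 : ((1 : ℝ) / 2) ^ (2 ^ i) < (1 / 2) ^ (r + n * p.natDegree) :=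
      pow_lt_pow_right_of_lt_one₀ (by norm_num) (by norm_num) hE
    have hab := abs_nonneg (x i - α)
    nlinarith
  · intro m
    have h1 := hL m (2 ^ n - 1)
    have hb : (((2 ^ n - 1 : ℕ) : ℝ) + 1) = 2 ^ n := by
      have : 1 ≤ 2 ^ n := Nat.one_le_two_pow
      push_cast [Nat.cast_sub this]; ring
    rw [hb, ← pow_mul] at h1
    have hab := abs_nonneg (α - (m : ℝ) / 2 ^ n)
    rw [one_div, inv_pow, inv_le_iff_one_le_mul₀ (by positivity)]
    calc (1 : ℝ) ≤ 2 ^ (n * p.natDegree) * (|α - (m : ℝ) / 2 ^ n| * A) := h1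
      _ ≤ 2 ^ (n * p.natDegree) * (|α - (m : ℝ) / 2 ^ n| * 2 ^ r) := by gcongr
      _ = _ := by rw [pow_add]; ring
end

section
/- Let y > 1 be a real number and let p ≥ 1 be an integer. Then the series ∑_{N=1}^{∞} (N mod p)·y^{−N} converges and equals y·(y^p − p·y + p − 1) / ((y − 1)²·(y^p − 1)). -/
theorem aux_fin (y : ℝ) (hy : 1 < y) (p : ℕ) :
    ∑ i ∈ Finset.range p, (i : ℝ) / y ^ i
      = y * (y ^ p - p * y + p - 1) / ((y - 1) ^ 2 * y ^ p) := by
  have h1 : y - 1 ≠ 0 := by linarith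
  have h0 : y ≠ 0 := by linarith
  induction p with
  | zero => simp
  | succ k ih =>
    rw [Finset.sum_range_succ, ih]
    push_cast
    rw [pow_succ]
    field_simp
    ring

/-- Let `y > 1` be real and `p ≥ 1` an integer. Then the series
`∑_{N=1}^{∞} (N mod p)·y^{−N}` converges, with sum
`y·(y^p − p·y + p − 1) / ((y − 1)²·(y^p − 1))`. -/
theorem stmt_12 (y : ℝ) (hy : 1 < y) (p : ℕ) (hp : 1 ≤ p) :
    HasSum (fun N : ℕ => (((N + 1) % p : ℕ) : ℝ) / y ^ (N + 1))
      (y * (y ^ p - p * y + p - 1) / ((y - 1) ^ 2 * (y ^ p - 1))) := by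
  have h1 : y - 1 ≠ 0 := by linarith
  have h0 : 0 < y := by linarith
  have hyp : 1 < y ^ p := one_lt_pow₀ hy (by omega)
  have hyp1 : y ^ p - 1 ≠ 0 := by linarith
  set f : ℕ → ℝ := fun N => ((N % p : ℕ) : ℝ) / y ^ N with hf
  have hs : Summable f := by
    have hg : Summable (fun N : ℕ => (p : ℝ) * (y⁻¹) ^ N) :=
      (summable_geometric_of_lt_one (by positivity) (inv_lt_one_of_one_lt₀ hy)).mul_left _
    refine Summable.of_nonneg_of_le (fun N => by positivity) (fun N => ?_) hg
    have : ((N % p : ℕ) : ℝ) ≤ p := by exact_mod_cast (Nat.mod_lt N hp).le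
    simp only [hf, div_eq_mul_inv, inv_pow]
    gcongr
  have h := hs.sum_add_tsum_nat_add p
  have hA : ∑ i ∈ Finset.range p, f i
      = y * (y ^ p - p * y + p - 1) / ((y - 1) ^ 2 * y ^ p) := by
    rw [← aux_fin y hy p]
    refine Finset.sum_congr rfl fun i hi => ?_
    simp only [hf, Nat.mod_eq_of_lt (Finset.mem_range.1 hi)]
  have hB : ∑' i, f (i + p) = (∑' i, f i) / y ^ p := by
    rw [← tsum_div_const]
    refine tsum_congr fun i => ?_
    simp only [hf, Nat.add_mod_right, pow_add, div_div]
  rw [hA, hB] at h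
  have hS : ∑' i, f i = y * (y ^ p - p * y + p - 1) / ((y - 1) ^ 2 * (y ^ p - 1)) := by
    have hne : y ^ p ≠ 0 := by positivity
    generalize ∑' i, f i = S at h ⊢
    field_simp at h ⊢
    linear_combination -h
  have h2 := (hasSum_nat_add_iff' (f := f) 1).2 hs.hasSum
  rw [hS] at h2
  simpa [hf] using h2
end

section
/- Let p and y be integers with 2 ≤ p < y, and let Q = ∑_{M=1}^{∞} (M mod p)·y^{−M}. Then for every integer N ≥ 1, the N-th base-y digit of Q equals N mod p; that is, ⌊y^N·Q⌋ − y·⌊y^{N−1}·Q⌋ = N mod p. -/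
/-- The tail of the digit expansion. -/
noncomputable def tailQ (p y N : ℕ) : ℝ :=
  ∑' M : ℕ, (((N + M + 1) % p : ℕ) : ℝ) / (y : ℝ) ^ (M + 1)

theorem geo_hasSum (p y : ℕ) (hp : 2 ≤ p) (hpy : p < y) :
    HasSum (fun M : ℕ => ((p : ℝ) - 1) / (y : ℝ) ^ (M + 1)) (((p : ℝ) - 1) / ((y : ℝ) - 1)) := by
  have h2 : (2 : ℝ) ≤ p := by exact_mod_cast hp
  have h3 : (p : ℝ) < y := by exact_mod_cast hpy
  have hy : (0 : ℝ) < y := by linarith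
  have h := (hasSum_geometric_of_lt_one (r := (y : ℝ)⁻¹) (by positivity)
    (inv_lt_one_of_one_lt₀ (by linarith))).mul_left (((p : ℝ) - 1) / y)
  have hne : (y : ℝ) - 1 ≠ 0 := by linarith
  have e1 : (fun M : ℕ => ((p : ℝ) - 1) / (y : ℝ) ^ (M + 1)) =
      fun M : ℕ => ((p : ℝ) - 1) / y * (y : ℝ)⁻¹ ^ M := by
    funext M
    rw [inv_pow, pow_succ]
    field_simp
  have e2 : ((p : ℝ) - 1) / ((y : ℝ) - 1) = ((p : ℝ) - 1) / y * (1 - (y : ℝ)⁻¹)⁻¹ := by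
    have : 1 - (y : ℝ)⁻¹ = (y - 1) / y := by field_simp
    rw [this]
    field_simp
  rw [e1, e2]
  exact h

theorem term_le (p y N M : ℕ) (hp : 2 ≤ p) :
    (((N + M + 1) % p : ℕ) : ℝ) / (y : ℝ) ^ (M + 1) ≤ ((p : ℝ) - 1) / (y : ℝ) ^ (M + 1) := by
  have h : (N + M + 1) % p + 1 ≤ p := Nat.mod_lt _ (by omega)
  have h' : (((N + M + 1) % p : ℕ) : ℝ) + 1 ≤ p := by exact_mod_cast h
  gcongr
  linarith

theorem tail_summable (p y N : ℕ) (hp : 2 ≤ p) (hpy : p < y) :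
    Summable (fun M : ℕ => (((N + M + 1) % p : ℕ) : ℝ) / (y : ℝ) ^ (M + 1)) :=
  Summable.of_nonneg_of_le (fun M => by positivity) (fun M => term_le p y N M hp)
    (geo_hasSum p y hp hpy).summable

theorem tail_lt (p y N : ℕ) (hp : 2 ≤ p) (hpy : p < y) : tailQ p y N < 1 := by
  have h2 : (2 : ℝ) ≤ p := by exact_mod_cast hp
  have h3 : (p : ℝ) < y := by exact_mod_cast hpy
  have h : tailQ p y N ≤ ((p : ℝ) - 1) / ((y : ℝ) - 1) := by
    rw [← (geo_hasSum p y hp hpy).tsum_eq]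
    exact (tail_summable p y N hp hpy).tsum_le_tsum (fun M => term_le p y N M hp)
      (geo_hasSum p y hp hpy).summable
  refine h.trans_lt ?_
  rw [div_lt_one (by linarith)]
  linarith

theorem tail_nonneg (p y N : ℕ) : 0 ≤ tailQ p y N :=
  tsum_nonneg fun M => by positivity

theorem tail_step (p y N : ℕ) (hp : 2 ≤ p) (hpy : p < y) :
    (y : ℝ) * tailQ p y N = (((N + 1) % p : ℕ) : ℝ) + tailQ p y (N + 1) := by
  have hy : (y : ℝ) ≠ 0 := by
    have : y ≠ 0 := by omega
    exact_mod_cast this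
  have e : tailQ p y (N + 1) =
      y * ∑' M : ℕ, (((N + (M + 1) + 1) % p : ℕ) : ℝ) / (y : ℝ) ^ (M + 1 + 1) := by
    rw [tailQ, ← tsum_mul_left]
    refine tsum_congr fun M => ?_
    rw [show N + 1 + M + 1 = N + (M + 1) + 1 by ring, pow_succ (y : ℝ) (M + 1)]
    field_simp
  rw [e, tailQ, (tail_summable p y N hp hpy).tsum_eq_zero_add, mul_add]
  congr 1
  simp
  field_simp

/-- Let `p, y` be integers with `2 ≤ p < y`, and let
`Q = ∑_{M=1}^{∞} (M mod p)·y^{−M}`. Then for every `N ≥ 1`, the `N`-th base-`y` digit of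
`Q` equals `N mod p`, i.e. `⌊y^N·Q⌋ − y·⌊y^{N−1}·Q⌋ = N mod p`. -/
theorem stmt_13 (p y : ℕ) (hp : 2 ≤ p) (hpy : p < y) (Q : ℝ)
    (hQ : Q = ∑' M : ℕ, (((M + 1) % p : ℕ) : ℝ) / (y : ℝ) ^ (M + 1)) :
    ∀ N : ℕ, 1 ≤ N →
      ⌊(y : ℝ) ^ N * Q⌋ - (y : ℤ) * ⌊(y : ℝ) ^ (N - 1) * Q⌋ = ((N % p : ℕ) : ℤ) := by
  have hQ0 : Q = tailQ p y 0 := by simp [hQ, tailQ]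
  have fl : ∀ (N : ℕ) (a : ℤ), (y : ℝ) ^ N * Q = a + tailQ p y N → ⌊(y : ℝ) ^ N * Q⌋ = a := by
    intro N a h
    rw [Int.floor_eq_iff, h]
    have := tail_lt p y N hp hpy
    have := tail_nonneg p y N
    constructor <;> linarith
  have step : ∀ (N : ℕ) (a : ℤ), (y : ℝ) ^ N * Q = a + tailQ p y N →
      (y : ℝ) ^ (N + 1) * Q =
        ((y * a + ((N + 1) % p : ℕ) : ℤ) : ℝ) + tailQ p y (N + 1) := by
    intro N a h
    have e := tail_step p y N hp hpy
    have : (y : ℝ) ^ (N + 1) * Q = y * ((y : ℝ) ^ N * Q) := by ring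
    rw [this, h, mul_add, e]
    generalize (N + 1) % p = d
    push_cast
    ring
  have ex : ∀ N : ℕ, ∃ a : ℤ, (y : ℝ) ^ N * Q = a + tailQ p y N := by
    intro N
    induction N with
    | zero => exact ⟨0, by simp [hQ0]⟩
    | succ N ih =>
      obtain ⟨a, h⟩ := ih
      exact ⟨_, step N a h⟩
  intro N hN
  obtain ⟨K, rfl⟩ : ∃ K, N = K + 1 := ⟨N - 1, by omega⟩
  obtain ⟨a, h⟩ := ex K
  rw [Nat.add_sub_cancel, fl _ _ h, fl _ _ (step K a h)]
  ring
end

section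
/- Let p be an odd prime and let t be a positive integer with 2^t ≡ 1 (mod p). Let Q = ∑_{M=1}^{∞} (M mod p)·2^{−tM}. Let b_0, …, b_{n−1} ∈ {0,1} be bits, not all zero, and set N = ∑_{i=0}^{n−1} b_i·2^{t·i}. Then the N-th base-2^t digit of Q, namely ⌊2^{tN}·Q⌋ mod 2^t, equals (∑_{i=0}^{n−1} b_i) mod p; in particular this digit is 0 if and only if ∑_{i} b_i ≡ 0 (mod p). -/
theorem tail_aux (p y : ℕ) (hp : 0 < p) (hy : p + 1 ≤ y) (N : ℕ) :
    Summable (fun k : ℕ => (((N + k + 1) % p : ℕ) : ℝ) / (y : ℝ) ^ (k + 1)) ∧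
    0 ≤ ∑' k : ℕ, (((N + k + 1) % p : ℕ) : ℝ) / (y : ℝ) ^ (k + 1) ∧
    ∑' k : ℕ, (((N + k + 1) % p : ℕ) : ℝ) / (y : ℝ) ^ (k + 1) < 1 := by
  have hyR : (p : ℝ) + 1 ≤ y := by exact_mod_cast hy
  have hpR : (1 : ℝ) ≤ p := by exact_mod_cast hp
  have hy0 : (0 : ℝ) < y := by linarith
  have hgeo : HasSum (fun k : ℕ => ((y : ℝ) - 2) / y * ((y : ℝ)⁻¹) ^ k)
      (((y : ℝ) - 2) / y * (1 - (y : ℝ)⁻¹)⁻¹) :=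
    (hasSum_geometric_of_lt_one (by positivity) (inv_lt_one_of_one_lt₀ (by linarith))).mul_left _
  have hle : ∀ k : ℕ, (((N + k + 1) % p : ℕ) : ℝ) / (y : ℝ) ^ (k + 1) ≤
      ((y : ℝ) - 2) / y * ((y : ℝ)⁻¹) ^ k := by
    intro k
    have h1 : (((N + k + 1) % p : ℕ) : ℝ) ≤ (y : ℝ) - 2 := by
      have : (N + k + 1) % p + 2 ≤ y := by
        have := Nat.mod_lt (N + k + 1) hp
        omega
      have : (((N + k + 1) % p : ℕ) : ℝ) + 2 ≤ y := by exact_mod_cast this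
      linarith
    have h2 : ((y : ℝ) - 2) / y * ((y : ℝ)⁻¹) ^ k = ((y : ℝ) - 2) / (y : ℝ) ^ (k + 1) := by
      rw [pow_succ, inv_pow]; field_simp
    rw [h2]
    gcongr
  have hnn : ∀ k : ℕ, 0 ≤ (((N + k + 1) % p : ℕ) : ℝ) / (y : ℝ) ^ (k + 1) := by
    intro k; positivity
  have hs := Summable.of_nonneg_of_le hnn hle hgeo.summable
  refine ⟨hs, tsum_nonneg hnn, ?_⟩
  have h3 := hs.tsum_le_tsum hle hgeo.summable
  rw [hgeo.tsum_eq] at h3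
  refine lt_of_le_of_lt h3 ?_
  have h4 : ((y : ℝ) - 2) / y * (1 - (y : ℝ)⁻¹)⁻¹ = ((y : ℝ) - 2) / (y - 1) := by
    have : (y : ℝ) - 1 ≠ 0 := by linarith
    have h5 : 1 - (y : ℝ)⁻¹ = (y - 1) / y := by field_simp
    rw [h5]; field_simp
  rw [h4, div_lt_one (by linarith)]
  linarith

def digitsA (p y : ℕ) : ℕ → ℕ
  | 0 => 0
  | N + 1 => y * digitsA p y N + (N + 1) % p

theorem expand_aux (p y : ℕ) (hp : 0 < p) (hy : p + 1 ≤ y) (N : ℕ) :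
    (y : ℝ) ^ N * ∑' M : ℕ, (((M + 1) % p : ℕ) : ℝ) / (y : ℝ) ^ (M + 1) =
      digitsA p y N + ∑' k : ℕ, (((N + k + 1) % p : ℕ) : ℝ) / (y : ℝ) ^ (k + 1) := by
  have hy0 : (y : ℝ) ≠ 0 := by
    have : y ≠ 0 := by omega
    exact_mod_cast this
  induction N with
  | zero => simp [digitsA]
  | succ N ih =>
    rw [pow_succ', mul_assoc, ih, (tail_aux p y hp hy N).1.tsum_eq_zero_add, mul_add, mul_add,
      ← tsum_mul_left]
    have h1 : ∀ k : ℕ, (y : ℝ) * ((((N + (k + 1) + 1) % p : ℕ) : ℝ) / (y : ℝ) ^ (k + 1 + 1)) =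
        (((N + 1 + k + 1) % p : ℕ) : ℝ) / (y : ℝ) ^ (k + 1) := by
      intro k
      rw [show N + (k + 1) + 1 = N + 1 + k + 1 by ring, pow_succ _ (k + 1)]
      field_simp
    simp only [h1, digitsA]
    rw [← add_assoc]
    congr 1
    push_cast
    simp only [add_zero, pow_one]
    field_simp

theorem digit_aux (p y : ℕ) (hp : 0 < p) (hy : p + 1 ≤ y) (Q : ℝ)
    (hQ : Q = ∑' M : ℕ, (((M + 1) % p : ℕ) : ℝ) / (y : ℝ) ^ (M + 1)) (m : ℕ) :
    ⌊(y : ℝ) ^ (m + 1) * Q⌋ % (y : ℤ) = (((m + 1) % p : ℕ) : ℤ) := by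
  obtain ⟨-, h0, h1⟩ := tail_aux p y hp hy (m + 1)
  have hf : ⌊(y : ℝ) ^ (m + 1) * Q⌋ = (digitsA p y (m + 1) : ℤ) := by
    rw [hQ, expand_aux p y hp hy, Int.floor_eq_iff]
    rw [Int.cast_natCast]
    constructor <;> linarith
  rw [hf]
  norm_cast
  rw [digitsA, Nat.mul_add_mod, Nat.mod_eq_of_lt]
  have := Nat.mod_lt (m + 1) hp
  omega

/-- Let `p` be an odd prime and `t ≥ 1` with `2^t ≡ 1 (mod p)`. Let
`Q = ∑_{M=1}^{∞} (M mod p)·2^{−tM}`. Given bits `b_0,…,b_{n−1} ∈ {0,1}`, not all zero,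
set `N = ∑_i b_i·2^{t·i}`. Then the `N`-th base-`2^t` digit of `Q`, namely
`⌊2^{tN}·Q⌋ mod 2^t`, equals `(∑_i b_i) mod p`; in particular this digit is `0` iff
`∑_i b_i ≡ 0 (mod p)`. -/
theorem stmt_14 (p : ℕ) (hp : p.Prime) (hodd : Odd p) (t : ℕ) (ht : 1 ≤ t)
    (hmod : 2 ^ t % p = 1) (Q : ℝ)
    (hQ : Q = ∑' M : ℕ, (((M + 1) % p : ℕ) : ℝ) / (2 : ℝ) ^ (t * (M + 1)))
    (n : ℕ) (b : ℕ → ℕ) (hb : ∀ i < n, b i ≤ 1) (hnz : ∃ i < n, b i = 1)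
    (N : ℕ) (hN : N = ∑ i ∈ Finset.range n, b i * 2 ^ (t * i)) :
    ⌊(2 : ℝ) ^ (t * N) * Q⌋ % (2 ^ t : ℤ) =
        (((∑ i ∈ Finset.range n, b i) % p : ℕ) : ℤ) ∧
      (⌊(2 : ℝ) ^ (t * N) * Q⌋ % (2 ^ t : ℤ) = 0 ↔
        (∑ i ∈ Finset.range n, b i) % p = 0) := by
  have hp2 := hp.two_le
  have hy1 : 2 ≤ 2 ^ t := by
    calc 2 = 2 ^ 1 := rfl
      _ ≤ 2 ^ t := Nat.pow_le_pow_right (by norm_num) ht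
  have hyp : p + 1 ≤ 2 ^ t := by
    have h1 := Nat.div_add_mod (2 ^ t) p
    rw [hmod] at h1
    have h2 : 1 ≤ 2 ^ t / p := by
      by_contra h
      have : 2 ^ t / p = 0 := Nat.lt_one_iff.1 (not_le.1 h)
      rw [this] at h1
      omega
    nlinarith
  have hNpos : 1 ≤ N := by
    obtain ⟨i, hi, hbi⟩ := hnz
    have h1 : b i * 2 ^ (t * i) ≤ N := by
      rw [hN]
      exact Finset.single_le_sum (f := fun i => b i * 2 ^ (t * i))
        (fun _ _ => Nat.zero_le _) (Finset.mem_range.2 hi)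
    have h2 : 0 < 2 ^ (t * i) := by positivity
    rw [hbi] at h1
    omega
  have hNmod : N % p = (∑ i ∈ Finset.range n, b i) % p := by
    have h1 : 2 ^ t ≡ 1 [MOD p] := by
      rw [Nat.ModEq, hmod, Nat.mod_eq_of_lt (by omega)]
    have h2 : N ≡ ∑ i ∈ Finset.range n, b i [MOD p] := by
      rw [hN]
      apply Nat.ModEq.sum
      intro i _
      have := (h1.pow i).mul_left (b i)
      simpa [pow_mul] using this
    exact h2
  have key : ⌊(2 : ℝ) ^ (t * N) * Q⌋ % (2 ^ t : ℤ) = ((N % p : ℕ) : ℤ) := by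
    have hQ2 : Q = ∑' M : ℕ, (((M + 1) % p : ℕ) : ℝ) / ((2 : ℝ) ^ t) ^ (M + 1) := by
      rw [hQ]; simp only [pow_mul]
    obtain ⟨m, rfl⟩ : ∃ m, N = m + 1 := ⟨N - 1, by omega⟩
    have := digit_aux p (2 ^ t) (by omega) hyp Q (by rw [hQ2]; push_cast; rfl) m
    rw [pow_mul]
    push_cast at this ⊢
    exact this
  rw [key, hNmod]
  exact ⟨rfl, by norm_cast⟩
end
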